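/- For the nonscalar grading of J₂ the following graded identities hold for all y₁,y₂,y₃ ∈ J₀ and z₁,z₂ ∈ J₁: (y₁,y₂,z₁)∘z₂ = (y₁,y₂,z₂)∘z₁ and (y₁,y₂,z₁)∘(z₂∘y₃) = (y₁,y₂,z₂)∘(y₃∘z₁). -/

import Mathlib

open Matrix

/-- The Jordan product `x ∘ y = (xy + yx)/2` on `2×2` matrices. -/
noncomputable def jmul {K : Type*} [Field K] (x y : Matrix (Fin 2) (Fin 2) K) :
    Matrix (Fin 2) (Fin 2) K :=
  (2 : K)⁻¹ • (x * y + y * x)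

/-- The associator `(x,y,z) = (x∘y)∘z − x∘(y∘z)`. -/
noncomputable def jassoc {K : Type*} [Field K] (x y z : Matrix (Fin 2) (Fin 2) K) :
    Matrix (Fin 2) (Fin 2) K :=
  jmul (jmul x y) z - jmul x (jmul y z)

/-- The matrix `a = e₁₁ − e₂₂`. -/
def amat (K : Type*) [Field K] : Matrix (Fin 2) (Fin 2) K := !![1, 0; 0, -1]

/-- The matrix `b = e₁₂ + e₂₁`. -/
def bmat (K : Type*) [Field K] : Matrix (Fin 2) (Fin 2) K := !![0, 1; 1, 0]

/-- The even part `J₀ = span{I, a}` of the nonscalar grading. -/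
def J0 (K : Type*) [Field K] : Submodule K (Matrix (Fin 2) (Fin 2) K) :=
  Submodule.span K {1, amat K}

/-- The odd part `J₁ = span{b}` of the nonscalar grading. -/
def J1 (K : Type*) [Field K] : Submodule K (Matrix (Fin 2) (Fin 2) K) :=
  Submodule.span K {bmat K}

/-!
For fixed `y₁`, `y₂`, `y₃`, both `(y₁, y₂, z) ∘ w` and `(y₁, y₂, z) ∘ (w ∘ y₃)` are bilinear in
`(z, w)`. A bilinear map takes the same value `c * d • B v v` at `(c • v, d • v)` and at
`(d • v, c • v)`, so it is symmetric on a line, and the odd part `J₁` is a line.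
-/

section Bilinear

variable {R M N : Type*} [CommSemiring R]

theorem bilin_comm_of_mem_span_singleton [AddCommMonoid M] [Module R M] [AddCommMonoid N]
    [Module R N] (B : M →ₗ[R] M →ₗ[R] N) {v x y : M} (hx : x ∈ Submodule.span R {v})
    (hy : y ∈ Submodule.span R {v}) : B x y = B y x := by
  obtain ⟨c, rfl⟩ := Submodule.mem_span_singleton.1 hx
  obtain ⟨d, rfl⟩ := Submodule.mem_span_singleton.1 hy
  simp only [map_smul, LinearMap.smul_apply, smul_comm c d]

variable [AddCommGroup M] [Module R M] (μ : M →ₗ[R] M →ₗ[R] M)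

/-- The associator `(x, y, z) = (x ∘ y) ∘ z − x ∘ (y ∘ z)` of a bilinear product `μ x y = x ∘ y`,
as a linear map in its last argument `z`. The product is an explicit bilinear map because the
Jordan product is not the `Mul` instance on matrices. -/
def bilinAssociator (x y : M) : M →ₗ[R] M :=
  μ (μ x y) - μ x ∘ₗ μ y

theorem mul_bilinAssociator_comm {v z₁ z₂ : M} (y₁ y₂ : M) (hz₁ : z₁ ∈ Submodule.span R {v})
    (hz₂ : z₂ ∈ Submodule.span R {v}) :
    μ (bilinAssociator μ y₁ y₂ z₁) z₂ = μ (bilinAssociator μ y₁ y₂ z₂) z₁ :=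
  bilin_comm_of_mem_span_singleton (μ ∘ₗ bilinAssociator μ y₁ y₂) hz₁ hz₂

theorem mul_bilinAssociator_mul_comm {v z₁ z₂ : M} (y₁ y₂ y₃ : M)
    (hz₁ : z₁ ∈ Submodule.span R {v}) (hz₂ : z₂ ∈ Submodule.span R {v}) :
    μ (bilinAssociator μ y₁ y₂ z₁) (μ z₂ y₃) = μ (bilinAssociator μ y₁ y₂ z₂) (μ z₁ y₃) :=
  bilin_comm_of_mem_span_singleton (μ.compl₁₂ (bilinAssociator μ y₁ y₂) (μ.flip y₃)) hz₁ hz₂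

theorem stmt12_general (hμ : ∀ x y, μ x y = μ y x) (v : M) :
    (∀ y₁ y₂, ∀ z₁ ∈ Submodule.span R {v}, ∀ z₂ ∈ Submodule.span R {v},
      μ (bilinAssociator μ y₁ y₂ z₁) z₂ = μ (bilinAssociator μ y₁ y₂ z₂) z₁) ∧
    (∀ y₁ y₂ y₃, ∀ z₁ ∈ Submodule.span R {v}, ∀ z₂ ∈ Submodule.span R {v},
      μ (bilinAssociator μ y₁ y₂ z₁) (μ z₂ y₃) =
        μ (bilinAssociator μ y₁ y₂ z₂) (μ y₃ z₁)) := by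
  refine ⟨fun y₁ y₂ _ hz₁ _ hz₂ ↦ mul_bilinAssociator_comm μ y₁ y₂ hz₁ hz₂,
    fun y₁ y₂ y₃ z₁ hz₁ _ hz₂ ↦ ?_⟩
  rw [hμ y₃ z₁]
  exact mul_bilinAssociator_mul_comm μ y₁ y₂ y₃ hz₁ hz₂

end Bilinear

section Jordan

variable {K : Type*} [Field K]

theorem jmul_comm (x y : Matrix (Fin 2) (Fin 2) K) : jmul x y = jmul y x :=
  congrArg ((2 : K)⁻¹ • ·) (add_comm (x * y) (y * x))

variable (K) in
/-- The Jordan product `jmul` bundled as a bilinear map. -/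
noncomputable def jmulBilin :
    Matrix (Fin 2) (Fin 2) K →ₗ[K] Matrix (Fin 2) (Fin 2) K →ₗ[K] Matrix (Fin 2) (Fin 2) K :=
  (2 : K)⁻¹ • (LinearMap.mul K _ + (LinearMap.mul K _).flip)

theorem jmulBilin_apply (x y : Matrix (Fin 2) (Fin 2) K) : jmulBilin K x y = jmul x y :=
  rfl

theorem bilinAssociator_jmulBilin_apply (x y z : Matrix (Fin 2) (Fin 2) K) :
    bilinAssociator (jmulBilin K) x y z = jassoc x y z :=
  rfl

end Jordan

/-- For the nonscalar grading: `(y₁,y₂,z₁)∘z₂ = (y₁,y₂,z₂)∘z₁` and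
`(y₁,y₂,z₁)∘(z₂∘y₃) = (y₁,y₂,z₂)∘(y₃∘z₁)`. -/
theorem stmt12 {K : Type*} [Field K] (h2 : (2 : K) ≠ 0) :
    (∀ y₁ ∈ J0 K, ∀ y₂ ∈ J0 K, ∀ z₁ ∈ J1 K, ∀ z₂ ∈ J1 K,
      jmul (jassoc y₁ y₂ z₁) z₂ = jmul (jassoc y₁ y₂ z₂) z₁) ∧
    (∀ y₁ ∈ J0 K, ∀ y₂ ∈ J0 K, ∀ y₃ ∈ J0 K, ∀ z₁ ∈ J1 K, ∀ z₂ ∈ J1 K,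
      jmul (jassoc y₁ y₂ z₁) (jmul z₂ y₃) = jmul (jassoc y₁ y₂ z₂) (jmul y₃ z₁)) := by
  have h := stmt12_general (jmulBilin K) jmul_comm (bmat K)
  simp only [jmulBilin_apply, bilinAssociator_jmulBilin_apply] at h
  exact ⟨fun y₁ _ y₂ _ ↦ h.1 y₁ y₂, fun y₁ _ y₂ _ y₃ _ ↦ h.2 y₁ y₂ y₃⟩
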